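/- arXiv:1303.4669 — 2 statements merged into one kernel-verified Lean document; each statement's English description precedes it below -/
import Mathlib

section
/- If C is a quasi-category and X is an arbitrary simplicial set, then the internal hom C^X is a quasi-category. -/
/-!
The functor `X ⊗ -` sends inner horn inclusions to inner anodyne extensions. Transposing lifting
problems across `X ⊗ - ⊣ ihom X`, the functor `ihom X` preserves inner fibrations, in particular
the map from a quasi-category to the terminal object, which `ihom X` preserves as a right adjoint.
-/

open CategoryTheory Simplicial MonoidalCategory

/-- Simplicial sets form a (cartesian) monoidal closed category; this provides the
internal homs `C^X := (ihom X).obj C`. -/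
noncomputable instance : MonoidalClosed SSet.{0} :=
  inferInstanceAs (MonoidalClosed (SimplexCategoryᵒᵖ ⥤ Type 0))

open SSet

universe u v

theorem le_inverseImage_llp_iff_le_inverseImage_rlp {A B : Type*} [Category* A] [Category* B]
    {F : A ⥤ B} {G : B ⥤ A} (adj : F ⊣ G) {W : MorphismProperty A} {T : MorphismProperty B} :
    W ≤ T.llp.inverseImage F ↔ T ≤ W.rlp.inverseImage G :=
  ⟨fun h _ _ p hp _ _ i hi ↦ (adj.hasLiftingProperty_iff i p).1 (h i hi p hp),
    fun h _ _ i hi _ _ p hp ↦ (adj.hasLiftingProperty_iff i p).2 (h p hp i hi)⟩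

theorem quasicategory_obj_of_adjunction {F : SSet.{u} ⥤ SSet.{v}} {G : SSet.{v} ⥤ SSet.{u}}
    (adj : F ⊣ G) (hF : innerHornInclusions ≤ innerAnodyneExtensions.inverseImage F)
    (C : SSet.{v}) [Quasicategory C] : Quasicategory (G.obj C) := by
  have hG : innerFibrations ≤ innerFibrations.inverseImage G :=
    (le_inverseImage_llp_iff_le_inverseImage_rlp adj).1 hF
  have := adj.rightAdjoint_preservesLimits
  have terminal_obj := Limits.terminalIsTerminal.isTerminalObj G _
  rw [quasicategory_iff_of_isTerminal (G.map (Limits.terminal.from C)) terminal_obj,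
    innerFibration_iff]
  exact hG _ (mem_innerFibrations _)

theorem innerHornInclusions_le_inverseImage_tensorLeft (X : SSet.{u}) :
    innerHornInclusions ≤ innerAnodyneExtensions.inverseImage (tensorLeft X) :=
  fun _ _ _ ⟨_, h0, hn⟩ ↦ (innerAnodyneExtensions.horn_ι h0 hn).whiskerLeft X

theorem quasicategory_ihom_general (C X : SSet.{u}) [Closed X] [Quasicategory C] :
    Quasicategory ((ihom X).obj C) :=
  quasicategory_obj_of_adjunction (ihom.adjunction X)
    (innerHornInclusions_le_inverseImage_tensorLeft X) C

/-- If `C` is a quasi-category and `X` is an arbitrary simplicial set, then the internal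
hom `C^X` is a quasi-category. -/
theorem quasicategory_ihom (C X : SSet.{0}) [SSet.Quasicategory C] :
    SSet.Quasicategory ((ihom X).obj C) := by
  exact quasicategory_ihom_general C X
end

section
/- For any groupoid G, the fundamental groupoid of the geometric realization of the nerve of G is equivalent (as a category) to G. -/
open CategoryTheory

/-!
Fix an object `x` of the groupoid `G`, and let `E` be the realization of the simplicial set of
tuples of arrows out of `x`. It is contractible, by coning off. Sending a tuple `(a₀, …, aₙ)` to
the simplex of the nerve with edges `aᵢ⁻¹ ≫ aⱼ` defines a map `p : E → BG`, and two tuples have the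
same image exactly when they differ by the free action of the vertex group of `x` by
precomposition. Hence `p` identifies the orbit space of `E` with the component of `x` in `BG`.

To see that the action on `E` is a covering action, regard a point of `E` as a step function on
`[0, 1)` with values in the arrows out of `x`, the barycentric coordinates being the lengths of the
steps. This is continuous for the Hamming distance, and `g ≠ 1` moves every step function by
distance `1` because it fixes no arrow.

So `p` is a simply connected covering of a component, and its fiber over a vertex `y` is the set of
arrows `x ⟶ y`. Sending such an arrow to the image under `p` of the paths in `E` from `𝟙 x` to it
is therefore a bijection onto the homotopy classes of paths from `x` to `y` in `BG`. Finally, every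
point of `BG` lies in the image of `p` for some `x`, so it is joined by a path to a vertex.
-/

namespace NerveRealization

open Opposite SimplexCategory
open scoped Simplicial

universe v u

section CoveringMaps

variable {E E' B Y : Type*} [TopologicalSpace E] [TopologicalSpace E'] [TopologicalSpace B]
  [TopologicalSpace Y]

theorem isQuotientCoveringMap_of_le_edist {A X : Type*} [Group A] [MulAction A E]
    [ContinuousConstSMul A E] [PseudoEMetricSpace X] {f : E → X} (hf : Continuous f)
    {r : ENNReal} (hr : r ≠ 0) (h : ∀ g : A, g ≠ 1 → ∀ e, r ≤ edist (f (g • e)) (f e)) :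
    IsQuotientCoveringMap (Quotient.mk (MulAction.orbitRel A E)) A where
  __ := isQuotientMap_quotient_mk'
  continuous_const_smul := continuous_const_smul
  apply_eq_iff_mem_orbit := Quotient.eq''
  disjoint e := by
    refine ⟨f ⁻¹' Metric.eball (f e) (r / 2),
      hf.continuousAt.preimage_mem_nhds (Metric.eball_mem_nhds _ (by simpa using hr)), ?_⟩
    rintro g ⟨_, ⟨e', he', rfl⟩, hge'⟩
    by_contra hg
    refine (h g hg e').not_gt ?_
    calc edist (f (g • e')) (f e')
        ≤ edist (f (g • e')) (f e) + edist (f e') (f e) := edist_triangle_right _ _ _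
      _ < r / 2 + r / 2 := ENNReal.add_lt_add hge' he'
      _ = r := ENNReal.add_halves r

theorem isCoveringMap_comp_of_isClopen_range {q : E → Y} (hq : IsCoveringMap q) {ψ : Y → B}
    (hψ : Topology.IsEmbedding ψ) (hrange : IsClopen (Set.range ψ)) : IsCoveringMap (ψ ∘ q) := by
  intro b
  by_cases hb : b ∈ Set.range ψ
  · exact ((hq.homeomorph_comp hψ.toHomeomorph ⟨b, hb⟩).subtypeVal_comp _
      hrange.isOpen).to_isEvenlyCovered_preimage
  · refine (IsEvenlyCovered.of_preimage_eq_empty Empty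
      (hrange.compl.isOpen.mem_nhds hb) ?_).to_isEvenlyCovered_preimage
    exact Set.eq_empty_of_forall_notMem fun e he ↦ he ⟨q e, rfl⟩

variable [SimplyConnectedSpace E] [SimplyConnectedSpace E'] {b b' b'' : B}

/-- The homotopy class of the image under `p` of any path from `e` to `e'` in a simply connected
space, as a class of paths between the points over which `e` and `e'` lie. -/
noncomputable def pathClass (p : C(E, B)) (e : p ⁻¹' {b}) (e' : p ⁻¹' {b'}) :
    Path.Homotopic.Quotient b b' :=
  ((Path.Homotopic.Quotient.mk (PathConnectedSpace.somePath e.1 e'.1)).map p).cast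
    e.2.symm e'.2.symm

lemma pathClass_eq_map (p : C(E, B)) (e : p ⁻¹' {b}) (e' : p ⁻¹' {b'})
    (γ : Path.Homotopic.Quotient e.1 e'.1) :
    pathClass p e e' = (γ.map p).cast e.2.symm e'.2.symm := by
  rw [pathClass, Subsingleton.elim γ]

lemma pathClass_self (p : C(E, B)) (e : p ⁻¹' {b}) : pathClass p e e = .refl b := by
  obtain ⟨e, rfl⟩ := e
  exact pathClass_eq_map p ⟨e, rfl⟩ ⟨e, rfl⟩ (.refl e)

lemma pathClass_trans (p : C(E, B)) (e : p ⁻¹' {b}) (e' : p ⁻¹' {b'}) (e'' : p ⁻¹' {b''}) :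
    (pathClass p e e').trans (pathClass p e' e'') = pathClass p e e'' := by
  obtain ⟨e, rfl⟩ := e
  obtain ⟨e', rfl⟩ := e'
  obtain ⟨e'', rfl⟩ := e''
  rw [pathClass_eq_map p ⟨e, rfl⟩ ⟨e'', rfl⟩
    (.mk ((PathConnectedSpace.somePath e e').trans (PathConnectedSpace.somePath e' e''))),
    ← Path.Homotopic.Quotient.mk_map, Path.map_trans]
  rfl

lemma pathClass_of_comp_eq {p : C(E, B)} {p' : C(E', B)} {φ : C(E', E)} (hφ : p.comp φ = p')
    {e : p ⁻¹' {b}} {e' : p ⁻¹' {b'}} {d : p' ⁻¹' {b}} {d' : p' ⁻¹' {b'}}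
    (he : φ d = e) (he' : φ d' = e') : pathClass p e e' = pathClass p' d d' := by
  obtain ⟨d, rfl⟩ := d
  obtain ⟨d', rfl⟩ := d'
  subst hφ
  obtain rfl : ⟨φ d, rfl⟩ = e := Subtype.ext he
  obtain rfl : ⟨φ d', rfl⟩ = e' := Subtype.ext he'
  exact pathClass_eq_map p ⟨φ d, rfl⟩ ⟨φ d', rfl⟩
    ((Path.Homotopic.Quotient.mk (PathConnectedSpace.somePath d d')).map φ)

theorem bijective_pathClass {p : C(E, B)} (hp : IsCoveringMap p) (e : p ⁻¹' {b}) :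
    Function.Bijective (pathClass p e : p ⁻¹' {b'} → Path.Homotopic.Quotient b b') := by
  refine Function.bijective_iff_has_inverse.2 ⟨fun γ ↦ hp.monodromy γ e, fun e' ↦ ?_, fun γ ↦ ?_⟩
  · obtain ⟨e, rfl⟩ := e
    obtain ⟨e', rfl⟩ := e'
    exact hp.monodromy_map (.mk (PathConnectedSpace.somePath e e'))
  · rw [pathClass_eq_map p _ _ (hp.liftPathQuotient γ e)]
    have hmap := congrArg (fun δ ↦ δ.cast e.2.symm (hp.monodromy γ e).2.symm)
      (hp.map_liftPathQuotient γ e)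
    exact hmap.trans ((γ.cast_cast ..).trans γ.cast_rfl_rfl)

end CoveringMaps

/-- The characteristic map `Δⁿ → |X|` of an `n`-simplex of `X`. -/
noncomputable def charMap {X : SSet.{u}} {n : ℕ} (s : X _⦋n⦌) :
    C(stdSimplex ℝ (Fin (n + 1)), SSet.toTop.obj X) :=
  TopCat.toSSetObjEquiv _ (op ⦋n⦌) ((sSetTopAdj.unit.app X).app (op ⦋n⦌) s)

section Realization

variable {X Y : SSet.{u}} {n m : ℕ}

lemma charMap_map (θ : Fin (n + 1) →o Fin (m + 1)) (s : X _⦋m⦌)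
    (t : stdSimplex ℝ (Fin (n + 1))) :
    charMap (X.map (mkHom θ).op s) t = charMap s (stdSimplex.map θ t) := by
  have h := NatTrans.naturality_apply (sSetTopAdj.unit.app X) (mkHom θ).op s
  exact DFunLike.congr_fun (congrArg (TopCat.toSSetObjEquiv _ (op ⦋n⦌)) h) t

lemma toTop_map_charMap (f : X ⟶ Y) (s : X _⦋n⦌) (t : stdSimplex ℝ (Fin (n + 1))) :
    SSet.toTop.map f (charMap s t) = charMap (f.app (op ⦋n⦌) s) t := by
  have h := congrArg (fun g ↦ g.app (op ⦋n⦌) s) (sSetTopAdj.unit.naturality f)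
  exact (DFunLike.congr_fun (congrArg (TopCat.toSSetObjEquiv _ (op ⦋n⦌)) h) t).symm

lemma realization_hom_ext {Z : Type u} [TopologicalSpace Z] {f g : C(SSet.toTop.obj X, Z)}
    (h : ∀ (n : ℕ) (s : X _⦋n⦌) (t : stdSimplex ℝ (Fin (n + 1))),
      f (charMap s t) = g (charMap s t)) : f = g := by
  suffices TopCat.ofHom f = TopCat.ofHom g from congrArg TopCat.Hom.hom this
  apply (sSetTopAdj.homEquiv X (TopCat.of Z)).injective
  rw [Adjunction.homEquiv_unit, Adjunction.homEquiv_unit]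
  ext n s
  apply (TopCat.toSSetObjEquiv (TopCat.of Z) n).injective
  ext t
  exact h n.unop.len s t

lemma exists_charMap_eq (x : SSet.toTop.obj X) :
    ∃ (n : ℕ) (s : X _⦋n⦌) (t : stdSimplex ℝ (Fin (n + 1))), charMap s t = x := by
  -- Two maps to the indiscrete two-point space that agree on all simplices are equal.
  let : TopologicalSpace (ULift.{u} Prop) := ⊤
  let inSimplex : C(SSet.toTop.obj X, ULift.{u} Prop) :=
    ⟨fun x ↦ ⟨∃ (n : ℕ) (s : X _⦋n⦌) (t : stdSimplex ℝ (Fin (n + 1))), charMap s t = x⟩,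
      continuous_top⟩
  have h : inSimplex = ⟨fun _ ↦ ⟨True⟩, continuous_top⟩ :=
    realization_hom_ext fun n s t ↦ congrArg ULift.up (eq_true ⟨n, s, t, rfl⟩)
  exact of_eq_true congr(($h x).down)

section Desc

variable {Z : Type u} [TopologicalSpace Z]
  (F : ∀ n : ℕ, X _⦋n⦌ → C(stdSimplex ℝ (Fin (n + 1)), Z))
  (hF : ∀ (n m : ℕ) (θ : Fin (n + 1) →o Fin (m + 1)) (s : X _⦋m⦌)
    (t : stdSimplex ℝ (Fin (n + 1))),
    F n (X.map (mkHom θ).op s) t = F m s (stdSimplex.map θ t))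

/-- A compatible family of maps on the simplices of `X`, as a map to the singular simplicial
set: the adjoint of `realizationDesc`. -/
noncomputable def toSingular : X ⟶ TopCat.toSSet.obj (TopCat.of Z) where
  app n := ↾fun s ↦ (TopCat.toSSetObjEquiv (TopCat.of Z) n).symm (F n.unop.len s)
  naturality n m θ := by
    ext s
    apply (TopCat.toSSetObjEquiv (TopCat.of Z) m).injective
    ext t
    exact hF _ _ θ.unop.toOrderHom s t

/-- The map out of `|X|` glued from a compatible family of maps on the simplices of `X`. -/
noncomputable def realizationDesc : C(SSet.toTop.obj X, Z) :=
  ((sSetTopAdj.homEquiv X (TopCat.of Z)).symm (toSingular F hF)).hom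

lemma realizationDesc_charMap (s : X _⦋n⦌) (t : stdSimplex ℝ (Fin (n + 1))) :
    realizationDesc F hF (charMap s t) = F n s t := by
  have h := (sSetTopAdj.homEquiv X (TopCat.of Z)).apply_symm_apply (toSingular F hF)
  rw [Adjunction.homEquiv_unit] at h
  exact congr(TopCat.toSSetObjEquiv (TopCat.of Z) (op ⦋n⦌) (($h).app (op ⦋n⦌) s) t)

end Desc

end Realization

section ConvexCombination

variable {ι κ : Type*} [Fintype ι] [Fintype κ]

/-- The point `(1 - r) a + r b` of the standard simplex. -/
noncomputable def mix (a b : stdSimplex ℝ ι) (r : unitInterval) : stdSimplex ℝ ι :=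
  ⟨(1 - r : ℝ) • ⇑a + (r : ℝ) • ⇑b,
    convex_stdSimplex ℝ ι a.2 b.2 (sub_nonneg.2 r.2.2) r.2.1 (sub_add_cancel _ _)⟩

lemma coe_mix (a b : stdSimplex ℝ ι) (r : unitInterval) :
    ⇑(mix a b r) = (1 - r : ℝ) • ⇑a + (r : ℝ) • ⇑b := rfl

lemma mix_zero (a b : stdSimplex ℝ ι) : mix a b 0 = a :=
  stdSimplex.ext (by simp [coe_mix])

lemma mix_one (a b : stdSimplex ℝ ι) : mix a b 1 = b :=
  stdSimplex.ext (by simp [coe_mix])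

lemma continuous_mix (b : stdSimplex ℝ ι) :
    Continuous fun p : stdSimplex ℝ ι × unitInterval ↦ mix p.1 b p.2 := by
  have : Continuous fun p : stdSimplex ℝ ι × unitInterval ↦ ⇑p.1 := continuous_subtype_val.fst'
  exact Continuous.subtype_mk (by fun_prop) _

lemma map_mix (f : ι → κ) (a b : stdSimplex ℝ ι) (r : unitInterval) :
    stdSimplex.map f (mix a b r) = mix (stdSimplex.map f a) (stdSimplex.map f b) r := by
  apply stdSimplex.ext
  simp only [stdSimplex.map_coe, coe_mix, map_add, map_smul]

end ConvexCombination

/-- The simplicial set whose `n`-simplices are the `(n + 1)`-tuples of elements of `V`: the nerve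
of the codiscrete category on `V`, with simplices encoded by their vertices. -/
def tuples (V : Type u) : SSet.{u} where
  obj n := Fin (n.unop.len + 1) → V
  map θ := ↾fun v i ↦ v (θ.unop.toOrderHom i)
  map_id _ := rfl
  map_comp _ _ := rfl

/-- The geometric realization of the simplicial set of tuples. -/
noncomputable abbrev Tuples (V : Type u) := SSet.toTop.obj (tuples V)

section Tuples

variable {U V W : Type u}

/-- The characteristic map of the simplex with a given tuple of vertices. -/
noncomputable def simplex {n : ℕ} (v : Fin (n + 1) → V) :
    C(stdSimplex ℝ (Fin (n + 1)), Tuples V) :=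
  charMap (X := tuples V) v

lemma simplex_comp {n m : ℕ} (θ : Fin (n + 1) →o Fin (m + 1)) (v : Fin (m + 1) → V)
    (t : stdSimplex ℝ (Fin (n + 1))) :
    simplex (v ∘ θ) t = simplex v (stdSimplex.map θ t) :=
  charMap_map θ (X := tuples V) v t

lemma exists_simplex_eq (e : Tuples V) :
    ∃ (n : ℕ) (v : Fin (n + 1) → V) (t : stdSimplex ℝ (Fin (n + 1))), simplex v t = e :=
  exists_charMap_eq e

/-- The vertex of `Tuples V` given by an element of `V`. -/
noncomputable def vertex (v : V) : Tuples V :=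
  simplex (fun _ : Fin 1 ↦ v) (stdSimplex.vertex 0)

lemma simplex_vertex {n : ℕ} (v : Fin (n + 1) → V) (i : Fin (n + 1)) :
    simplex v (stdSimplex.vertex i) = vertex (v i) := by
  have h : stdSimplex.map (OrderHom.const (Fin 1) i) (stdSimplex.vertex (S := ℝ) 0) =
      stdSimplex.vertex i := stdSimplex.map_vertex _ _
  rw [← h, ← simplex_comp]
  rfl

/-- The map of realizations induced by a map of vertices. -/
noncomputable def mapTuples (φ : V → W) : C(Tuples V, Tuples W) :=
  (SSet.toTop.map { app _ := ↾fun v i ↦ φ (v i) : tuples V ⟶ tuples W }).hom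

lemma mapTuples_simplex (φ : V → W) {n : ℕ} (v : Fin (n + 1) → V)
    (t : stdSimplex ℝ (Fin (n + 1))) : mapTuples φ (simplex v t) = simplex (φ ∘ v) t :=
  toTop_map_charMap _ _ _

lemma mapTuples_vertex (φ : V → W) (v : V) : mapTuples φ (vertex v) = vertex (φ v) :=
  mapTuples_simplex φ _ _

lemma mapTuples_id (e : Tuples V) : mapTuples id e = e := by
  obtain ⟨n, v, t, rfl⟩ := exists_simplex_eq e
  rw [mapTuples_simplex, Function.id_comp]

lemma mapTuples_comp (ψ : V → W) (φ : U → V) (e : Tuples U) :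
    mapTuples (ψ ∘ φ) e = mapTuples ψ (mapTuples φ e) := by
  obtain ⟨n, v, t, rfl⟩ := exists_simplex_eq e
  simp only [mapTuples_simplex, Function.comp_assoc]

/-- The extension of a monotone map to the cones on its source and target. -/
def coneOrderHom {n m : ℕ} (θ : Fin (n + 1) →o Fin (m + 1)) :
    Fin (n + 1 + 1) →o Fin (m + 1 + 1) where
  toFun := Fin.cons 0 (Fin.succ ∘ θ)
  monotone' i j hij := by
    cases i using Fin.cases with
    | zero => exact Fin.zero_le _
    | succ i =>
      cases j using Fin.cases with
      | zero => simp at hij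
      | succ j => simpa using θ.monotone (Fin.succ_le_succ_iff.1 hij)

lemma cons_comp_coneOrderHom {n m : ℕ} (θ : Fin (n + 1) →o Fin (m + 1)) (v₀ : V)
    (v : Fin (m + 1) → V) :
    (Fin.cons v₀ v : Fin (m + 1 + 1) → V) ∘ coneOrderHom θ = Fin.cons v₀ (v ∘ θ) := by
  funext i
  cases i using Fin.cases <;> rfl

/-- The homotopy from the identity of `Tuples V` to the constant map at `v₀`: on the simplex
`v`, it is the straight line homotopy to the cone vertex in the simplex `(v₀, v)`. -/
noncomputable def cone (v₀ : V) : C(Tuples V, C(unitInterval, Tuples V)) :=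
  realizationDesc (fun n v ↦ ContinuousMap.curry
    ((simplex (Fin.cons v₀ v : Fin (n + 1 + 1) → V)).comp
      ⟨fun p ↦ mix (stdSimplex.map Fin.succ p.1) (stdSimplex.vertex 0) p.2,
        (continuous_mix _).comp ((stdSimplex.continuous_map _).prodMap continuous_id)⟩)) (by
    intro n m θ (v : Fin (m + 1) → V) t
    ext r
    change simplex (Fin.cons v₀ (v ∘ θ) : Fin (n + 1 + 1) → V)
        (mix (stdSimplex.map Fin.succ t) (stdSimplex.vertex 0) r) =
      simplex (Fin.cons v₀ v : Fin (m + 1 + 1) → V)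
        (mix (stdSimplex.map Fin.succ (stdSimplex.map θ t)) (stdSimplex.vertex 0) r)
    rw [← cons_comp_coneOrderHom, simplex_comp, map_mix, stdSimplex.map_comp_apply,
      stdSimplex.map_comp_apply, stdSimplex.map_vertex]
    rfl)

lemma cone_simplex {n : ℕ} (v₀ : V) (v : Fin (n + 1) → V) (t : stdSimplex ℝ (Fin (n + 1)))
    (r : unitInterval) :
    cone v₀ (simplex v t) r = simplex (Fin.cons v₀ v : Fin (n + 1 + 1) → V)
      (mix (stdSimplex.map Fin.succ t) (stdSimplex.vertex 0) r) :=
  DFunLike.congr_fun (realizationDesc_charMap (X := tuples V) _ _ v t) r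

instance [Nonempty V] : ContractibleSpace (Tuples V) := by
  obtain ⟨v₀⟩ := ‹Nonempty V›
  rw [contractible_iff_id_nullhomotopic]
  refine ⟨vertex v₀, ⟨⟨⟨fun p ↦ cone v₀ p.2 p.1, by fun_prop⟩, fun e ↦ ?_, fun e ↦ ?_⟩⟩⟩ <;>
    obtain ⟨n, v, t, rfl⟩ := exists_simplex_eq e
  · let δ₀ : Fin (n + 1) →o Fin (n + 1 + 1) := ⟨Fin.succ, Fin.strictMono_succ.monotone⟩
    change cone v₀ (simplex v t) 0 = simplex v t
    rw [cone_simplex, mix_zero]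
    exact (simplex_comp δ₀ _ t).symm
  · change cone v₀ (simplex v t) 1 = vertex v₀
    rw [cone_simplex, mix_one, simplex_vertex, Fin.cons_zero]

end Tuples

section HammingDistance

open MeasureTheory

/-- Functions `Ω → V` with the Hamming distance: the measure of the set where two functions
differ. -/
def HammingFun (Ω V : Type*) := Ω → V

variable {Ω V : Type*} [MeasureSpace Ω]

noncomputable instance : PseudoEMetricSpace (HammingFun Ω V) where
  edist a b := volume {s | a s ≠ b s}
  edist_self a := by simp
  edist_comm a b := by simp only [ne_comm]
  edist_triangle a b c := by
    refine (measure_mono fun s hac ↦ ?_).trans (measure_union_le _ _)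
    by_contra! h
    simp_all

lemma HammingFun.edist_def (a b : HammingFun Ω V) : edist a b = volume {s | a s ≠ b s} := rfl

lemma HammingFun.edist_of_forall_ne {a b : HammingFun Ω V} (h : ∀ s, a s ≠ b s) :
    edist a b = volume (Set.univ : Set Ω) := by
  rw [edist_def, Set.eq_univ_of_forall (s := {s | a s ≠ b s}) h]

end HammingDistance

section SimplexQuantile

variable {ι κ : Type*} [Fintype ι] [Fintype κ]

lemma stdSimplex_sum_map [DecidableEq κ] (f : ι → κ) (t : stdSimplex ℝ ι) (S : Finset κ) :
    ∑ k ∈ S, stdSimplex.map f t k = ∑ i with f i ∈ S, t i := by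
  classical
  simp only [stdSimplex.map_coe, FunOnFinite.linearMap_apply_apply]
  convert Finset.sum_fiberwise_eq_sum_filter Finset.univ S f t

variable [LinearOrder ι] [LinearOrder κ]

/-- The cumulative distribution function of a point of the simplex, regarded as a probability
distribution on the vertices. -/
noncomputable def cdf (t : stdSimplex ℝ ι) (i : ι) : ℝ := ∑ j with j ≤ i, t j

lemma cdf_mono (t : stdSimplex ℝ ι) : Monotone (cdf t) := fun _ _ hij ↦
  Finset.sum_le_sum_of_subset_of_nonneg
    (Finset.monotone_filter_right _ fun _ _ hk ↦ hk.trans hij)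
    fun k _ _ ↦ stdSimplex.zero_le t k

lemma continuous_cdf (i : ι) : Continuous fun t : stdSimplex ℝ ι ↦ cdf t i :=
  continuous_finsetSum _ fun j _ ↦ (continuous_apply j).comp continuous_subtype_val

lemma exists_lt_cdf (t : stdSimplex ℝ ι) (s : Set.Ico (0 : ℝ) 1) :
    (Finset.univ.filter fun i ↦ (s : ℝ) < cdf t i).Nonempty := by
  have : Nonempty ι := by
    by_contra h
    simpa [not_nonempty_iff.1 h] using stdSimplex.sum_eq_one t
  obtain ⟨i, hi⟩ := Finite.exists_max fun i : ι ↦ i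
  refine ⟨i, Finset.mem_filter.2 ⟨Finset.mem_univ i, ?_⟩⟩
  rw [cdf, Finset.filter_true_of_mem fun j _ ↦ hi j, stdSimplex.sum_eq_one]
  exact s.2.2

/-- The quantile function of a point of the simplex, regarded as a probability distribution on
the vertices: the first vertex at which the cumulative distribution function exceeds `s`. -/
noncomputable def quantile (t : stdSimplex ℝ ι) (s : Set.Ico (0 : ℝ) 1) : ι :=
  (Finset.univ.filter fun i ↦ (s : ℝ) < cdf t i).min' (exists_lt_cdf t s)

lemma quantile_le_iff {t : stdSimplex ℝ ι} {s : Set.Ico (0 : ℝ) 1} {i : ι} :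
    quantile t s ≤ i ↔ (s : ℝ) < cdf t i := by
  have hmin := Finset.min'_mem _ (exists_lt_cdf t s)
  refine ⟨fun h ↦ (Finset.mem_filter.1 hmin).2.trans_le (cdf_mono t h), fun h ↦ ?_⟩
  exact Finset.min'_le _ _ (Finset.mem_filter.2 ⟨Finset.mem_univ i, h⟩)

lemma quantile_mem_iff {L : Finset ι} (hL : IsLowerSet (L : Set ι)) {t : stdSimplex ℝ ι}
    {s : Set.Ico (0 : ℝ) 1} : quantile t s ∈ L ↔ (s : ℝ) < ∑ j ∈ L, t j := by
  rcases L.eq_empty_or_nonempty with rfl | hne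
  · simpa using s.2.1
  · have hmem (j : ι) : j ∈ L ↔ j ≤ L.max' hne :=
      ⟨L.le_max' j, fun h ↦ hL h (L.max'_mem hne)⟩
    have hL' : L = ({j | j ≤ L.max' hne} : Finset ι) := by ext j; simp [hmem]
    rw [hmem, quantile_le_iff, cdf, ← hL']

lemma quantile_map {f : ι → κ} (hf : Monotone f) (t : stdSimplex ℝ ι)
    (s : Set.Ico (0 : ℝ) 1) : quantile (stdSimplex.map f t) s = f (quantile t s) := by
  refine eq_of_forall_ge_iff fun k ↦ ?_
  have hlower : IsLowerSet (({i | f i ≤ k} : Finset ι) : Set ι) := fun i j hji hi ↦ by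
    simp only [Finset.coe_filter, Finset.mem_univ, true_and, Set.mem_ofPred_eq] at hi ⊢
    exact (hf hji).trans hi
  rw [quantile_le_iff, cdf, stdSimplex_sum_map]
  simpa using (quantile_mem_iff hlower (t := t) (s := s)).symm

lemma exists_mem_uIcc_cdf_of_quantile_ne {t t' : stdSimplex ℝ ι} {s : Set.Ico (0 : ℝ) 1}
    (h : quantile t s ≠ quantile t' s) : ∃ i, (s : ℝ) ∈ Set.uIcc (cdf t i) (cdf t' i) := by
  wlog hlt : quantile t s < quantile t' s generalizing t t'
  · obtain ⟨i, hi⟩ := this h.symm (h.lt_or_gt.resolve_left hlt)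
    exact ⟨i, by rwa [Set.uIcc_comm]⟩
  · refine ⟨quantile t s, Set.mem_uIcc.2 (Or.inr ⟨?_, ?_⟩)⟩
    · exact not_lt.1 fun h' ↦ hlt.not_ge (quantile_le_iff.2 h')
    · exact (quantile_le_iff.1 le_rfl).le

end SimplexQuantile

section StepFunctions

open MeasureTheory

attribute [local instance] Measure.Subtype.measureSpace

variable {ι V : Type*} [Fintype ι] [LinearOrder ι]

/-- The step function on `[0, 1)` taking the values `v i` successively, on intervals whose lengths
are the barycentric coordinates of `t`. -/
noncomputable def stepFun (v : ι → V) (t : stdSimplex ℝ ι) : HammingFun (Set.Ico (0 : ℝ) 1) V :=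
  fun s ↦ v (quantile t s)

lemma edist_stepFun_le (v : ι → V) (t t' : stdSimplex ℝ ι) :
    edist (stepFun v t) (stepFun v t') ≤ ∑ i, ENNReal.ofReal |cdf t' i - cdf t i| := by
  simp only [HammingFun.edist_def, ← volume_image_subtype_coe measurableSet_Ico,
    ← Real.volume_interval]
  refine (measure_mono ?_).trans (measure_biUnion_finset_le _ _)
  rintro _ ⟨s, hs, rfl⟩
  obtain ⟨i, hi⟩ := exists_mem_uIcc_cdf_of_quantile_ne fun h ↦ hs (congrArg v h)
  exact Set.mem_biUnion (Finset.mem_univ i) hi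

lemma continuous_stepFun (v : ι → V) : Continuous (stepFun v) := by
  refine continuous_iff_continuousAt.2 fun t ↦ tendsto_iff_edist_tendsto_0.2 ?_
  have hbound : Continuous fun t' : stdSimplex ℝ ι ↦
      ∑ i, ENNReal.ofReal |cdf t i - cdf t' i| :=
    continuous_finsetSum _ fun i _ ↦
      ENNReal.continuous_ofReal.comp (continuous_const.sub (continuous_cdf i)).abs
  refine tendsto_of_tendsto_of_tendsto_of_le_of_le tendsto_const_nhds ?_ (fun _ ↦ zero_le)
    fun t' ↦ edist_stepFun_le v t' t
  simpa using hbound.tendsto t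

end StepFunctions

section Action

attribute [local instance] MeasureTheory.Measure.Subtype.measureSpace

variable {V : Type u}

/-- The map from `Tuples V` to step functions on `[0, 1)` that is `stepFun v` on the simplex
`v`. -/
noncomputable def toStepFun : C(Tuples V, HammingFun (Set.Ico (0 : ℝ) 1) V) :=
  realizationDesc (X := tuples V) (fun n (v : Fin (n + 1) → V) ↦ ⟨stepFun v, continuous_stepFun v⟩)
    fun _ _ θ v t ↦ funext fun s ↦ congrArg v (quantile_map θ.monotone t s).symm

lemma toStepFun_simplex {n : ℕ} (v : Fin (n + 1) → V) (t : stdSimplex ℝ (Fin (n + 1))) :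
    toStepFun (simplex v t) = stepFun v t :=
  realizationDesc_charMap (X := tuples V) _ _ v t

lemma vertex_injective : Function.Injective (vertex (V := V)) := fun v w h ↦ by
  have hstep := congrArg toStepFun h
  rw [vertex, vertex, toStepFun_simplex, toStepFun_simplex] at hstep
  exact congrFun hstep ⟨0, by simp⟩

variable {A : Type*} [Group A] [MulAction A V]

noncomputable instance : MulAction A (Tuples V) where
  smul g := mapTuples (g • ·)
  one_smul e := by
    change mapTuples (fun v ↦ (1 : A) • v) e = e
    simp only [one_smul]
    exact mapTuples_id e
  mul_smul g h e := by
    change mapTuples (fun v ↦ (g * h) • v) e = mapTuples (g • ·) (mapTuples (h • ·) e)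
    simp only [mul_smul]
    exact mapTuples_comp _ _ e

lemma smul_simplex (g : A) {n : ℕ} (v : Fin (n + 1) → V) (t : stdSimplex ℝ (Fin (n + 1))) :
    g • simplex v t = simplex (g • v) t := mapTuples_simplex _ v t

lemma smul_vertex (g : A) (v : V) : g • vertex v = vertex (g • v) := mapTuples_vertex _ v

instance : ContinuousConstSMul A (Tuples V) := ⟨fun g ↦ (mapTuples (g • ·)).continuous⟩

lemma toStepFun_smul (g : A) (e : Tuples V) (s : Set.Ico (0 : ℝ) 1) :
    toStepFun (g • e) s = g • toStepFun e s := by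
  obtain ⟨n, v, t, rfl⟩ := exists_simplex_eq e
  rw [smul_simplex, toStepFun_simplex, toStepFun_simplex]
  rfl

theorem isQuotientCoveringMap_tuples [IsCancelSMul A V] :
    IsQuotientCoveringMap (Quotient.mk (MulAction.orbitRel A (Tuples V))) A := by
  refine isQuotientCoveringMap_of_le_edist toStepFun.continuous one_ne_zero fun g hg e ↦ ?_
  have hne (s : Set.Ico (0 : ℝ) 1) : toStepFun (g • e) s ≠ toStepFun e s := fun h ↦
    hg (IsCancelSMul.eq_one_of_smul (toStepFun_smul g e s ▸ h))
  rw [HammingFun.edist_of_forall_ne hne]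
  simp [MeasureTheory.Measure.Subtype.volume_univ nullMeasurableSet_Ico]

end Action

section Groupoid

variable {G : Type u} [Groupoid.{v} G]

/-- An arrow out of `x`. The vertex group of `x` acts freely on these by precomposition. -/
structure OutArrow (x : G) where
  {target : G}
  hom : x ⟶ target

instance (x : G) : Nonempty (OutArrow x) := ⟨⟨𝟙 x⟩⟩

/-- Precomposition with `f`, as a map from the arrows out of `y` to those out of `x`. -/
def precomp {x y : G} (f : x ⟶ y) (a : OutArrow y) : OutArrow x := ⟨f ≫ a.hom⟩

instance (x : G) : MulAction (x ⟶ x) (OutArrow x) where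
  smul := precomp
  one_smul a := congrArg OutArrow.mk (Category.id_comp a.hom)
  mul_smul g h a := congrArg OutArrow.mk (Category.assoc g h a.hom)

lemma OutArrow.mk_injective {x y : G} : Function.Injective (mk : (x ⟶ y) → OutArrow x) :=
  fun f f' h ↦ by injection h

instance (x : G) : IsCancelSMul (x ⟶ x) (OutArrow x) where
  right_cancel' _ _ a h := (cancel_mono a.hom).1 (OutArrow.mk_injective h)

variable {x y : G} {n m : ℕ}

/-- The simplex of the nerve whose vertices are the targets of the arrows `a i` out of `x`, and
whose edges are the resulting arrows `(a i)⁻¹ ≫ a j` between them. -/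
noncomputable def nerveSimplex (a : Fin (n + 1) → OutArrow x) : ComposableArrows G n where
  obj i := (a i).target
  map {i j} _ := inv (a i).hom ≫ (a j).hom
  map_id i := by simp
  map_comp _ _ := by simp

lemma nerveSimplex_precomp (f : x ⟶ y) (a : Fin (n + 1) → OutArrow y) :
    nerveSimplex (precomp f ∘ a) = nerveSimplex a :=
  Functor.hext (fun _ ↦ rfl) fun i j _ ↦ heq_of_eq (by simp [nerveSimplex, precomp])

/-- The lift of a simplex of the nerve determined by an arrow from `x` to its first vertex. -/
def liftSimplex (σ : ComposableArrows G n) (f : x ⟶ σ.obj 0) : Fin (n + 1) → OutArrow x :=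
  fun i ↦ ⟨f ≫ σ.map (homOfLE (Fin.zero_le i))⟩

lemma nerveSimplex_liftSimplex (σ : ComposableArrows G n) (f : x ⟶ σ.obj 0) :
    nerveSimplex (liftSimplex σ f) = σ := by
  refine Functor.hext (fun _ ↦ rfl) fun i j h ↦ heq_of_eq ((IsIso.inv_comp_eq _).2 ?_)
  change f ≫ σ.map (homOfLE (Fin.zero_le j)) = (f ≫ σ.map (homOfLE (Fin.zero_le i))) ≫ σ.map h
  rw [Category.assoc, ← Functor.map_comp]
  rfl

lemma liftSimplex_nerveSimplex (a : Fin (n + 1) → OutArrow x) :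
    liftSimplex (nerveSimplex a) (a 0).hom = a :=
  funext fun i ↦ congrArg OutArrow.mk (by simp [nerveSimplex])

lemma liftSimplex_comp (σ : ComposableArrows G n) (g : x ⟶ x) (f : x ⟶ σ.obj 0) :
    liftSimplex σ (g ≫ f) = g • liftSimplex σ f :=
  funext fun _ ↦ congrArg OutArrow.mk (Category.assoc _ _ _)

lemma liftSimplex_map (θ : Fin (n + 1) →o Fin (m + 1)) (σ : (nerve G) _⦋m⦌)
    (f : x ⟶ ComposableArrows.obj' σ 0) :
    liftSimplex ((nerve G).map (mkHom θ).op σ) (f ≫ σ.map (homOfLE (Fin.zero_le (θ 0)))) =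
      liftSimplex σ f ∘ θ := by
  funext i
  refine congrArg OutArrow.mk ((Category.assoc _ _ _).trans (congrArg (f ≫ ·) ?_))
  exact (σ.map_comp _ _).symm

end Groupoid

section ClassifyingSpace

/-- The classifying space of a groupoid. -/
noncomputable abbrev ClassifyingSpace (G : Type u) [Groupoid.{v} G] := SSet.toTop.obj (nerve G)

variable {G : Type u} [Groupoid.{v} G] {x y : G} {n : ℕ}

/-- The universal cover of the component of `x` in the classifying space of `G`. -/
noncomputable def nerveCover (x : G) : C(Tuples (OutArrow x), ClassifyingSpace G) :=
  (SSet.toTop.map { app _ := ↾nerveSimplex : tuples (OutArrow x) ⟶ nerve G }).hom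

lemma nerveCover_simplex (a : Fin (n + 1) → OutArrow x) (t : stdSimplex ℝ (Fin (n + 1))) :
    nerveCover x (simplex a t) = charMap (X := nerve G) (nerveSimplex a) t :=
  toTop_map_charMap _ _ _

lemma nerveCover_simplex_liftSimplex (σ : (nerve G) _⦋n⦌) (f : x ⟶ ComposableArrows.obj' σ 0)
    (t : stdSimplex ℝ (Fin (n + 1))) :
    nerveCover x (simplex (liftSimplex σ f) t) = charMap σ t := by
  rw [nerveCover_simplex]
  exact congrArg (charMap (X := nerve G) · t) (nerveSimplex_liftSimplex σ f)

lemma exists_nerveCover_eq (b : ClassifyingSpace G) : ∃ x : G, ∃ e, nerveCover x e = b := by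
  obtain ⟨n, σ, t, rfl⟩ := exists_charMap_eq b
  exact ⟨_, _, nerveCover_simplex_liftSimplex σ (𝟙 _) t⟩

lemma nerveCover_comp_mapTuples_precomp (f : x ⟶ y) :
    (nerveCover x).comp (mapTuples (precomp f)) = nerveCover y := by
  ext e
  obtain ⟨n, a, t, rfl⟩ := exists_simplex_eq e
  rw [ContinuousMap.comp_apply, mapTuples_simplex, nerveCover_simplex, nerveCover_simplex,
    nerveSimplex_precomp]

/-- The orbit space of the vertex group of `x` acting on the cover `Tuples (OutArrow x)`. -/
abbrev Orbits (x : G) := MulAction.orbitRel.Quotient (x ⟶ x) (Tuples (OutArrow x))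

lemma orbit_simplex_liftSimplex (σ : ComposableArrows G n) (f f' : x ⟶ σ.obj 0)
    (t : stdSimplex ℝ (Fin (n + 1))) :
    (⟦simplex (liftSimplex σ f) t⟧ : Orbits x) = ⟦simplex (liftSimplex σ f') t⟧ := by
  refine Quotient.sound ⟨f ≫ inv f', ?_⟩
  change (f ≫ inv f') • simplex (liftSimplex σ f') t = simplex (liftSimplex σ f) t
  rw [smul_simplex, ← liftSimplex_comp, Category.assoc, IsIso.inv_hom_id, Category.comp_id]

open Classical in
/-- The orbit of the lifts of a simplex of the nerve, if there are any. -/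
noncomputable def liftOrbit (x : G) (σ : ComposableArrows G n) :
    C(stdSimplex ℝ (Fin (n + 1)), Orbits x ⊕ PUnit.{max u v + 1}) :=
  if h : Nonempty (x ⟶ σ.obj 0) then
    ⟨fun t ↦ .inl ⟦simplex (liftSimplex σ h.some) t⟧,
      continuous_inl.comp (continuous_quotient_mk'.comp (ContinuousMap.continuous _))⟩
  else .const _ (.inr ⟨⟩)

lemma liftOrbit_of_hom {σ : ComposableArrows G n} (f : x ⟶ σ.obj 0)
    (t : stdSimplex ℝ (Fin (n + 1))) :
    liftOrbit x σ t = .inl ⟦simplex (liftSimplex σ f) t⟧ := by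
  rw [liftOrbit, dif_pos ⟨f⟩]
  exact congrArg Sum.inl (orbit_simplex_liftSimplex σ _ f t)

lemma liftOrbit_of_isEmpty {σ : ComposableArrows G n} (h : IsEmpty (x ⟶ σ.obj 0))
    (t : stdSimplex ℝ (Fin (n + 1))) : liftOrbit x σ t = .inr ⟨⟩ := by
  rw [liftOrbit, dif_neg (not_nonempty_iff.2 h)]
  rfl

/-- The map from the classifying space to the orbit space `Orbits x` that is inverse to the map
induced by `nerveCover x` on the component of `x`, and sends the other components to an extra
point. -/
noncomputable def toOrbits (x : G) : C(ClassifyingSpace G, Orbits x ⊕ PUnit.{max u v + 1}) :=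
  realizationDesc (X := nerve G) (fun _ ↦ liftOrbit x) fun n m θ σ t ↦ by
    let e : ComposableArrows.obj' σ 0 ⟶ ((nerve G).map (mkHom θ).op σ).obj 0 :=
      σ.map (homOfLE (Fin.zero_le (θ 0)))
    rcases isEmpty_or_nonempty (x ⟶ ComposableArrows.obj' σ 0) with h | ⟨⟨f⟩⟩
    · rw [liftOrbit_of_isEmpty h, liftOrbit_of_isEmpty ⟨fun f ↦ h.false (f ≫ inv e)⟩]
    · rw [liftOrbit_of_hom f, liftOrbit_of_hom (f ≫ e), ← simplex_comp, ← liftSimplex_map]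

lemma toOrbits_charMap (σ : (nerve G) _⦋n⦌) (t : stdSimplex ℝ (Fin (n + 1))) :
    toOrbits x (charMap σ t) = liftOrbit x σ t :=
  realizationDesc_charMap (X := nerve G) _ _ σ t

lemma toOrbits_nerveCover (e : Tuples (OutArrow x)) :
    toOrbits x (nerveCover x e) = .inl ⟦e⟧ := by
  obtain ⟨n, a, t, rfl⟩ := exists_simplex_eq e
  rw [nerveCover_simplex]
  refine (toOrbits_charMap (nerveSimplex a) t).trans ?_
  rw [liftOrbit_of_hom (σ := nerveSimplex a) (a 0).hom, liftSimplex_nerveSimplex]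

lemma nonempty_hom_of_toOrbits_charMap_eq {σ : (nerve G) _⦋n⦌} {t : stdSimplex ℝ (Fin (n + 1))}
    {o : Orbits x} (h : toOrbits x (charMap σ t) = .inl o) :
    Nonempty (x ⟶ ComposableArrows.obj' σ 0) := by
  by_contra hσ
  rw [toOrbits_charMap, liftOrbit_of_isEmpty (not_nonempty_iff.1 hσ)] at h
  cases h

/-- The map from the orbit space to the classifying space induced by `nerveCover x`. -/
noncomputable def ofOrbits (x : G) : C(Orbits x, ClassifyingSpace G) where
  toFun := Quotient.lift (nerveCover x) (by
    rintro _ e ⟨g, rfl⟩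
    exact DFunLike.congr_fun (nerveCover_comp_mapTuples_precomp g) e)
  continuous_toFun := (nerveCover x).continuous.quotient_lift _

lemma toOrbits_ofOrbits (o : Orbits x) : toOrbits x (ofOrbits x o) = .inl o := by
  induction o using Quotient.inductionOn with
  | h e => exact toOrbits_nerveCover e

lemma isEmbedding_ofOrbits (x : G) : Topology.IsEmbedding (ofOrbits x) := by
  refine .of_comp (ofOrbits x).continuous (toOrbits x).continuous ?_
  convert Topology.IsEmbedding.inl
  exact funext toOrbits_ofOrbits

lemma range_ofOrbits (x : G) :
    Set.range (ofOrbits x) = toOrbits x ⁻¹' Set.range Sum.inl := by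
  ext b
  constructor
  · rintro ⟨o, rfl⟩
    exact ⟨o, (toOrbits_ofOrbits o).symm⟩
  · rintro ⟨o, ho⟩
    obtain ⟨n, σ, t, rfl⟩ := exists_charMap_eq b
    obtain ⟨f⟩ := nonempty_hom_of_toOrbits_charMap_eq ho.symm
    exact ⟨⟦simplex (liftSimplex σ f) t⟧, nerveCover_simplex_liftSimplex σ f t⟩

theorem isCoveringMap_nerveCover (x : G) : IsCoveringMap (nerveCover x) := by
  refine isCoveringMap_comp_of_isClopen_range
    (isQuotientCoveringMap_tuples (A := x ⟶ x)).isCoveringMap (isEmbedding_ofOrbits x) ?_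
  rw [range_ofOrbits]
  exact IsClopen.preimage ⟨isClosed_range_inl, isOpen_range_inl⟩ (toOrbits x).continuous

/-- The vertex of the classifying space given by an object. -/
noncomputable def nerveVertex (x : G) : ClassifyingSpace G :=
  nerveCover x (vertex ⟨𝟙 x⟩)

lemma nerveCover_vertex (f : x ⟶ y) : nerveCover x (vertex ⟨f⟩) = nerveVertex y := by
  rw [nerveVertex, ← nerveCover_comp_mapTuples_precomp f, ContinuousMap.comp_apply,
    mapTuples_vertex, precomp, Category.comp_id]

/-- The vertices of `Tuples (OutArrow x)` given by the arrows to `y`, as points of the fiber over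
the vertex `y` of the classifying space. -/
noncomputable def fiberVertex (f : x ⟶ y) : nerveCover x ⁻¹' {nerveVertex y} :=
  ⟨vertex ⟨f⟩, nerveCover_vertex f⟩

theorem bijective_fiberVertex :
    Function.Bijective (fiberVertex : (x ⟶ y) → nerveCover x ⁻¹' {nerveVertex y}) := by
  refine ⟨fun f f' h ↦ OutArrow.mk_injective (vertex_injective (congrArg Subtype.val h)), ?_⟩
  rintro ⟨e, he⟩
  have horbit : toOrbits x (nerveVertex y) = .inl ⟦e⟧ := by
    rw [← toOrbits_nerveCover, he]
  obtain ⟨f⟩ : Nonempty (x ⟶ y) := by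
    rw [nerveVertex, vertex, nerveCover_simplex] at horbit
    exact nonempty_hom_of_toOrbits_charMap_eq horbit
  rw [← nerveCover_vertex f, toOrbits_nerveCover] at horbit
  obtain ⟨g, hg⟩ := Quotient.exact (Sum.inl_injective horbit).symm
  refine ⟨g ≫ f, Subtype.ext ?_⟩
  exact (smul_vertex g (OutArrow.mk f)).symm.trans hg

/-- The functor sending `f : x ⟶ y` to the image in the classifying space of the paths from
`𝟙 x` to `f` in the cover `nerveCover x`. -/
noncomputable def toFundamentalGroupoid (G : Type u) [Groupoid.{v} G] :
    G ⥤ FundamentalGroupoid (ClassifyingSpace G) where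
  obj x := ⟨nerveVertex x⟩
  map {x y} f := pathClass (nerveCover x) (fiberVertex (𝟙 x)) (fiberVertex f)
  map_id x := pathClass_self _ _
  map_comp {x y z} f g := by
    have hg : pathClass (nerveCover x) (fiberVertex f) (fiberVertex (f ≫ g)) =
        pathClass (nerveCover y) (fiberVertex (𝟙 y)) (fiberVertex g) := by
      refine pathClass_of_comp_eq (nerveCover_comp_mapTuples_precomp f) ?_ (mapTuples_vertex _ _)
      rw [fiberVertex, mapTuples_vertex, precomp, Category.comp_id]
      rfl
    rw [← hg]
    exact (pathClass_trans _ _ _ _).symm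

lemma bijective_toFundamentalGroupoid_map (x y : G) :
    Function.Bijective ((toFundamentalGroupoid G).map : (x ⟶ y) → _) :=
  (bijective_pathClass (isCoveringMap_nerveCover x) _).comp bijective_fiberVertex

instance : (toFundamentalGroupoid G).Faithful where
  map_injective h := (bijective_toFundamentalGroupoid_map _ _).injective h

instance : (toFundamentalGroupoid G).Full where
  map_surjective := (bijective_toFundamentalGroupoid_map _ _).surjective

instance : (toFundamentalGroupoid G).EssSurj where
  mem_essImage := by
    rintro ⟨b⟩
    obtain ⟨x, e, he⟩ := exists_nerveCover_eq b
    let γ : (toFundamentalGroupoid G).obj x ⟶ ⟨b⟩ :=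
      pathClass (nerveCover x) (fiberVertex (𝟙 x)) ⟨e, he⟩
    exact ⟨x, ⟨asIso γ⟩⟩

instance : (toFundamentalGroupoid G).IsEquivalence where

end ClassifyingSpace

end NerveRealization

theorem fundamentalGroupoid_of_realization_of_nerve_equiv_general.{v, u}
    (G : Type u) [Groupoid.{v} G] :
    Nonempty (FundamentalGroupoid (SSet.toTop.obj (nerve G)) ≌ G) :=
  ⟨(NerveRealization.toFundamentalGroupoid G).asEquivalence.symm⟩

/-- For any groupoid `G`, the fundamental groupoid of the geometric realization of the
nerve of `G` (i.e. of the classifying space `BG`) is equivalent, as a category, to `G`. -/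
theorem fundamentalGroupoid_of_realization_of_nerve_equiv
    (G : Type) [Groupoid G] :
    Nonempty (FundamentalGroupoid (SSet.toTop.obj (nerve G)) ≌ G) :=
  fundamentalGroupoid_of_realization_of_nerve_equiv_general G
end
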